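/- arXiv:1107.2735 — 3 statements merged into one kernel-verified Lean document; each statement's English description precedes it below -/
import Mathlib

section
/- Let n ≥ 3 be an integer, let η > 0, and let m, α, β satisfy 0 < m ≤ (n−2)/n, β > 0, α > 0, and α ≤ β·(n−2)/m. Let v be a radial solution of (E) on [0,∞). Then v is strictly decreasing on (0,∞) and 0 < v(r) ≤ η for all r ≥ 0; moreover, with k = β/α, the lower bound v(r) ≥ (r₀²·v(r₀)^{2k} / r²)^{1/(2k)} holds for all r ≥ r₀ > 0 (i.e. r²·v(r)^{2k} is nondecreasing in r). -/
open Real Set Filter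

/-- `v` is a radial solution of the elliptic equation
`((n-1)/m)·((v^m)'' + ((n-1)/r)(v^m)') + α v + β r v' = 0` on `[0, ∞)`
with `v > 0`, `v(0) = η`, `v'(0) = 0`. -/
def IsRadialSol (n : ℕ) (m α β η : ℝ) (v : ℝ → ℝ) : Prop :=
  (∀ r ∈ Set.Ici (0:ℝ), 0 < v r) ∧
  ContinuousOn v (Set.Ici (0:ℝ)) ∧
  ContDiffOn ℝ 2 v (Set.Ioi (0:ℝ)) ∧
  HasDerivWithinAt v 0 (Set.Ici (0:ℝ)) 0 ∧
  v 0 = η ∧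
  ∀ r ∈ Set.Ioi (0:ℝ),
    (((n : ℝ) - 1) / m) * (deriv (deriv (fun s => v s ^ m)) r
      + (((n : ℝ) - 1) / r) * deriv (fun s => v s ^ m) r)
    + α * v r + β * r * deriv v r = 0

/-!
Write the equation in divergence form: the flux `(N-1) r^(N-1) v^(m-1) v'` has derivative
`-r^(N-1) (α v + β r v')`. Up to the factor `β`, the quantity `α v + β r v'` is the derivative of
`t ↦ t^(α/β) v(t r)` at `t = 1`, and everything follows from its positivity. Multiplied by
`(N-1) r^(N-2) v^(m-1)` it becomes a function `Q` satisfying a linear differential inequality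
`Q' ≥ A Q`; this is where `m α ≤ β (N-2)` enters. As `v'` has the cluster value `0` at the origin,
`Q` is positive at points arbitrarily close to `0`, hence everywhere by Grönwall. Then the flux
decreases from its cluster value `0`, so `v' < 0`, while `r^(α/β) v(r)` increases, which is the
lower bound.
-/

open scoped Topology

theorem mul_exp_integral_le_of_mul_le_deriv {f f' A : ℝ → ℝ} {a b : ℝ} (hab : a ≤ b)
    (hA : ContinuousOn A (Icc a b)) (hf : ContinuousOn f (Icc a b))
    (hf' : ∀ x ∈ Ioo a b, HasDerivAt f (f' x) x) (hle : ∀ x ∈ Ioo a b, A x * f x ≤ f' x) :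
    f a * exp (∫ x in a..b, A x) ≤ f b := by
  set I : ℝ → ℝ := fun x ↦ ∫ t in a..x, A t
  have hI : ContinuousOn I (Icc a b) := by
    rw [← uIcc_of_le hab] at hA ⊢
    exact intervalIntegral.continuousOn_primitive_interval hA.integrableOn_uIcc
  have hI' : ∀ x ∈ Ioo a b, HasDerivAt I (A x) x := fun x hx ↦
    intervalIntegral.integral_hasDerivAt_right
      ((hA.mono (Icc_subset_Icc_right hx.2.le)).intervalIntegrable_of_Icc hx.1.le)
      ((hA.mono Ioo_subset_Icc_self).stronglyMeasurableAtFilter isOpen_Ioo x hx)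
      (hA.continuousAt (Icc_mem_nhds hx.1 hx.2))
  have hmono : MonotoneOn (fun x ↦ f x * exp (-I x)) (Icc a b) := by
    refine monotoneOn_of_hasDerivWithinAt_nonneg (f' := fun x ↦ (f' x - A x * f x) * exp (-I x))
      (convex_Icc a b) (hf.mul hI.neg.rexp) ?_ ?_ <;> rw [interior_Icc] <;> intro x hx
    · refine (((hf' x hx).mul (hI' x hx).neg.exp).congr_deriv ?_).hasDerivWithinAt
      simp only [Pi.neg_apply]
      ring
    · exact mul_nonneg (sub_nonneg.2 (hle x hx)) (exp_pos _).le
  have h : f a ≤ f b * exp (-I b) := by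
    simpa [I] using hmono (left_mem_Icc.2 hab) (right_mem_Icc.2 hab) hab
  rwa [exp_neg, ← div_eq_mul_inv, le_div_iff₀ (exp_pos _)] at h

theorem mapClusterPt_deriv_of_hasDerivWithinAt {f : ℝ → ℝ} {a c : ℝ}
    (hf : ∀ᶠ x in 𝓝[>] a, DifferentiableAt ℝ f x) (ha : HasDerivWithinAt f c (Ici a) a) :
    MapClusterPt c (𝓝[>] a) (deriv f) := by
  refine mapClusterPt_iff_frequently.2 fun U hU ↦ frequently_iff.2 fun {s} hs ↦ ?_
  obtain ⟨b, hab, hb⟩ := mem_nhdsGT_iff_exists_Ioo_subset.1 (inter_mem hs hf)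
  have hslope : ∀ᶠ x in 𝓝[>] a, slope f a x ∈ U :=
    (hasDerivWithinAt_iff_tendsto_slope' self_notMem_Ioi).1 ha.Ioi_of_Ici hU
  obtain ⟨x, hxU, hx⟩ := (hslope.and (Ioo_mem_nhdsGT hab)).exists
  have hdiff : ∀ y ∈ Ioc a x, DifferentiableAt ℝ f y := fun y hy ↦
    (hb ⟨hy.1, hy.2.trans_lt hx.2⟩).2
  have hcont : ContinuousOn f (Icc a x) := by
    intro y hy
    rcases hy.1.eq_or_lt with rfl | hay
    · exact ha.continuousWithinAt.mono Icc_subset_Ici_self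
    · exact (hdiff y ⟨hay, hy.2⟩).continuousAt.continuousWithinAt
  obtain ⟨y, hy, hyx⟩ := exists_deriv_eq_slope f hx.1 hcont fun y hy ↦
    (hdiff y (Ioo_subset_Ioc_self hy)).differentiableWithinAt
  refine ⟨y, (hb ⟨hy.1, hy.2.trans hx.2⟩).1, ?_⟩
  rwa [hyx, ← slope_def_field]

theorem sq_mul_rpow_div_sq_rpow_one_div {x y r k : ℝ} (hx : 0 ≤ x) (hy : 0 ≤ y) (hr : 0 ≤ r)
    (hk : k ≠ 0) :
    (x ^ 2 * y ^ (2 * k) / r ^ 2) ^ (1 / (2 * k)) = x ^ (1 / k) * y / r ^ (1 / k) := by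
  have hsq : ∀ {z : ℝ}, 0 ≤ z → (z ^ 2) ^ (1 / (2 * k)) = z ^ (1 / k) := fun {z} hz ↦ by
    rw [← rpow_natCast_mul hz]
    congr 1
    push_cast
    field_simp
  have hyk : (y ^ (2 * k)) ^ (1 / (2 * k)) = y := by
    rw [one_div, rpow_rpow_inv hy (mul_ne_zero two_ne_zero hk)]
  rw [div_rpow (by positivity) (by positivity), mul_rpow (by positivity) (by positivity), hsq hx,
    hsq hr, hyk]

/-- The radial flux `(N-1) r^(N-1) v^(m-1) v'` of the nonlinear diffusion `((N-1)/m) Δ(v^m)`, in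
real dimension `N`; its derivative is `r^(N-1)` times that diffusion term. The factor `1/m` has
cancelled, so `m = 0` is allowed. -/
noncomputable def radialFlux (N m : ℝ) (v : ℝ → ℝ) (r : ℝ) : ℝ :=
  (N - 1) * r ^ (N - 1) * v r ^ (m - 1) * deriv v r

/-- The function `Q = (N-1) r^(N-2) v^(m-1) (α v + β r v')`, which carries the sign of
`α v + β r v'`. It is written through the flux so that the equation yields its derivative. -/
noncomputable def scalingFlux (N m α β : ℝ) (v : ℝ → ℝ) (r : ℝ) : ℝ :=
  (N - 1) * α * (r ^ (N - 2) * v r ^ m) + β * radialFlux N m v r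

theorem scalingFlux_eq {N m α β r : ℝ} {v : ℝ → ℝ} (hr : 0 < r) (hvr : 0 < v r) :
    scalingFlux N m α β v r =
      (N - 1) * r ^ (N - 2) * v r ^ (m - 1) * (α * v r + β * r * deriv v r) := by
  have hrN : r ^ (N - 1) = r ^ (N - 2) * r := by
    rw [← rpow_add_one hr.ne']
    ring_nf
  rw [scalingFlux, radialFlux, hrN, rpow_sub_one hvr.ne']
  field_simp

/-- Positive radial solutions on `[0, ∞)`, with `v'(0) = 0`, of the equation
`((N-1)/m) Δ(v^m) + α v + β x·∇v = 0` in divergence form. The dimension `N` and the exponent `m`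
are arbitrary reals; `m = 0` stands for logarithmic diffusion `(N-1) Δ(log v)`. -/
structure IsDivFormRadialSol (N m α β : ℝ) (v : ℝ → ℝ) : Prop where
  pos : ∀ r, 0 ≤ r → 0 < v r
  differentiableAt : ∀ r, 0 < r → DifferentiableAt ℝ v r
  hasDerivWithinAt_zero : HasDerivWithinAt v 0 (Ici 0) 0
  hasDerivAt_radialFlux : ∀ r, 0 < r →
    HasDerivAt (radialFlux N m v) (-(r ^ (N - 1) * (α * v r + β * r * deriv v r))) r

theorem IsRadialSol.isDivFormRadialSol {n : ℕ} {m α β η : ℝ} {v : ℝ → ℝ} (hm : m ≠ 0)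
    (hv : IsRadialSol n m α β η v) : IsDivFormRadialSol n m α β v := by
  obtain ⟨hpos, -, hC2, hzero, -, hode⟩ := hv
  have hdiff : ∀ r : ℝ, 0 < r → DifferentiableAt ℝ v r := fun r hr ↦
    (hC2.contDiffAt (Ioi_mem_nhds hr)).differentiableAt two_ne_zero
  refine ⟨hpos, hdiff, hzero, fun r hr ↦ ?_⟩
  set g : ℝ → ℝ := deriv fun s ↦ v s ^ m
  have hg : HasDerivAt g (deriv g r) r := by
    have hpow : ContDiffOn ℝ 2 (fun s ↦ v s ^ m) (Ioi 0) :=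
      hC2.rpow_const_of_ne fun s hs ↦ (hpos s (Ioi_subset_Ici_self hs)).ne'
    have hC1 : ContDiffOn ℝ 1 g (Ioi 0) := hpow.deriv_of_isOpen isOpen_Ioi (by norm_num)
    exact ((hC1.contDiffAt (Ioi_mem_nhds hr)).differentiableAt one_ne_zero).hasDerivAt
  have hflux : radialFlux n m v =ᶠ[𝓝 r] fun s ↦ ((n : ℝ) - 1) / m * (s ^ ((n : ℝ) - 1) * g s) := by
    filter_upwards [Ioi_mem_nhds hr] with s hs
    have hgs : g s = deriv v s * m * v s ^ (m - 1) :=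
      ((hdiff s hs).hasDerivAt.rpow_const (Or.inl (hpos s (Ioi_subset_Ici_self hs)).ne')).deriv
    rw [radialFlux, hgs]
    field_simp
  refine ((((hasDerivAt_rpow_const (Or.inl hr.ne')).mul hg).const_mul _).congr_of_eventuallyEq
    hflux).congr_deriv ?_
  have hode_r := hode r hr
  rw [rpow_sub_one hr.ne']
  linear_combination r ^ ((n : ℝ) - 1) * hode_r

namespace IsDivFormRadialSol

variable {N m α β : ℝ} {v : ℝ → ℝ} {r : ℝ}

theorem continuousOn (hv : IsDivFormRadialSol N m α β v) : ContinuousOn v (Ici 0) := by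
  intro r hr
  rcases (mem_Ici.1 hr).eq_or_lt with rfl | hr
  · exact hv.hasDerivWithinAt_zero.continuousWithinAt
  · exact (hv.differentiableAt r hr).continuousAt.continuousWithinAt

theorem exists_ultrafilter_tendsto_deriv_zero (hv : IsDivFormRadialSol N m α β v) :
    ∃ l : Ultrafilter ℝ, ↑l ≤ 𝓝[>] (0 : ℝ) ∧ Tendsto (deriv v) l (𝓝 0) :=
  mapClusterPt_iff_ultrafilter.1 <| mapClusterPt_deriv_of_hasDerivWithinAt
    (eventually_mem_nhdsWithin.mono hv.differentiableAt) hv.hasDerivWithinAt_zero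

theorem tendsto_nhdsGT_zero (hv : IsDivFormRadialSol N m α β v) :
    Tendsto v (𝓝[>] 0) (𝓝 (v 0)) :=
  (hv.continuousOn 0 self_mem_Ici).mono_left (nhdsWithin_mono 0 Ioi_subset_Ici_self)

theorem frequently_mul_add_mul_deriv_pos (hα : 0 < α) (hv : IsDivFormRadialSol N m α β v) :
    ∃ᶠ r in 𝓝[>] 0, 0 < α * v r + β * r * deriv v r := by
  obtain ⟨l, hl, hderiv⟩ := hv.exists_ultrafilter_tendsto_deriv_zero
  have hid : Tendsto (fun r : ℝ ↦ r) l (𝓝 0) := hl.trans nhdsWithin_le_nhds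
  have hlim : Tendsto (fun r ↦ α * v r + β * r * deriv v r) l (𝓝 (α * v 0 + β * 0 * 0)) :=
    ((hv.tendsto_nhdsGT_zero.mono_left hl).const_mul α).add ((hid.const_mul β).mul hderiv)
  have hpos : 0 < α * v 0 + β * 0 * 0 := by simpa using mul_pos hα (hv.pos 0 le_rfl)
  exact (hlim.eventually_const_lt hpos).frequently.filter_mono hl

theorem scalingFlux_pos_iff (hN : 1 < N) (hv : IsDivFormRadialSol N m α β v) (hr : 0 < r) :
    0 < scalingFlux N m α β v r ↔ 0 < α * v r + β * r * deriv v r := by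
  have hvr := hv.pos r hr.le
  have hweight : 0 < (N - 1) * r ^ (N - 2) * v r ^ (m - 1) :=
    mul_pos (mul_pos (sub_pos.2 hN) (rpow_pos_of_pos hr _)) (rpow_pos_of_pos hvr _)
  rw [scalingFlux_eq hr hvr, mul_pos_iff_of_pos_left hweight]

theorem hasDerivAt_scalingFlux (hv : IsDivFormRadialSol N m α β v) (hr : 0 < r) :
    HasDerivAt (scalingFlux N m α β v)
      ((N - 1) * α * ((N - 2) * r ^ (N - 2 - 1) * v r ^ m
          + r ^ (N - 2) * (deriv v r * m * v r ^ (m - 1)))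
        + β * -(r ^ (N - 1) * (α * v r + β * r * deriv v r))) r :=
  (((hasDerivAt_rpow_const (Or.inl hr.ne')).mul ((hv.differentiableAt r hr).hasDerivAt.rpow_const
    (Or.inl (hv.pos r hr.le).ne'))).const_mul _).add ((hv.hasDerivAt_radialFlux r hr).const_mul β)

theorem mul_scalingFlux_le_deriv (hN : 1 < N) (hα : 0 ≤ α) (hβ : 0 < β)
    (hαβ : m * α ≤ β * (N - 2)) (hv : IsDivFormRadialSol N m α β v) (hr : 0 < r) :
    (m * α / β / r - β / (N - 1) * (r * v r ^ (1 - m))) * scalingFlux N m α β v r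
      ≤ deriv (scalingFlux N m α β v) r := by
  have hvr := hv.pos r hr.le
  have hN' : 0 < N - 1 := sub_pos.2 hN
  have hexcess : 0 ≤ (N - 1) * α * (r ^ (N - 2) / r) * v r ^ m * ((β * (N - 2) - m * α) / β) := by
    have := sub_nonneg.2 hαβ
    positivity
  have hrN : r ^ (N - 1) = r ^ (N - 2) * r := by
    rw [← rpow_add_one hr.ne']
    ring_nf
  refine sub_nonneg.1 (hexcess.trans_eq ?_)
  rw [(hv.hasDerivAt_scalingFlux hr).deriv, scalingFlux_eq hr hvr, rpow_sub_one hr.ne', hrN,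
    rpow_sub_one hvr.ne', rpow_sub hvr, rpow_one]
  field_simp
  ring

theorem mul_add_mul_deriv_pos (hN : 1 < N) (hα : 0 < α) (hβ : 0 < β) (hαβ : m * α ≤ β * (N - 2))
    (hv : IsDivFormRadialSol N m α β v) (hr : 0 < r) : 0 < α * v r + β * r * deriv v r := by
  obtain ⟨x, hx, hx0, hxr⟩ := ((hv.frequently_mul_add_mul_deriv_pos hα).and_eventually
    (Ioo_mem_nhdsGT hr)).exists
  have hpos : ∀ s ∈ Icc x r, 0 < s := fun s hs ↦ hx0.trans_le hs.1
  have hcont : ContinuousOn (fun s ↦ m * α / β / s - β / (N - 1) * (s * v s ^ (1 - m)))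
      (Icc x r) := by
    have hvpow : ContinuousOn (fun s ↦ v s ^ (1 - m)) (Icc x r) :=
      (hv.continuousOn.mono fun s hs ↦ (hpos s hs).le).rpow_const fun s hs ↦
        Or.inl (hv.pos s (hpos s hs).le).ne'
    exact (continuousOn_const.div continuousOn_id fun s hs ↦ (hpos s hs).ne').sub
      (continuousOn_const.mul (continuousOn_id.mul hvpow))
  have hderiv : ∀ s ∈ Icc x r, HasDerivAt (scalingFlux N m α β v)
      (deriv (scalingFlux N m α β v) s) s := fun s hs ↦
    (hv.hasDerivAt_scalingFlux (hpos s hs)).differentiableAt.hasDerivAt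
  have hgronwall := mul_exp_integral_le_of_mul_le_deriv hxr.le hcont
    (fun s hs ↦ (hderiv s hs).continuousAt.continuousWithinAt)
    (fun s hs ↦ hderiv s (Ioo_subset_Icc_self hs))
    fun s hs ↦ hv.mul_scalingFlux_le_deriv hN hα.le hβ hαβ (hpos s (Ioo_subset_Icc_self hs))
  exact (hv.scalingFlux_pos_iff hN hr).1 <|
    (mul_pos ((hv.scalingFlux_pos_iff hN hx0).2 hx) (exp_pos _)).trans_le hgronwall

theorem strictAntiOn_radialFlux (hN : 1 < N) (hα : 0 < α) (hβ : 0 < β)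
    (hαβ : m * α ≤ β * (N - 2)) (hv : IsDivFormRadialSol N m α β v) :
    StrictAntiOn (radialFlux N m v) (Ioi 0) := by
  refine strictAntiOn_of_hasDerivWithinAt_neg (convex_Ioi 0)
    (fun r hr ↦ (hv.hasDerivAt_radialFlux r hr).continuousAt.continuousWithinAt)
    (fun r hr ↦ (hv.hasDerivAt_radialFlux r (interior_subset hr)).hasDerivWithinAt)
    fun r hr ↦ neg_neg_of_pos ?_
  have hr : 0 < r := interior_subset hr
  exact mul_pos (rpow_pos_of_pos hr _) (hv.mul_add_mul_deriv_pos hN hα hβ hαβ hr)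

theorem mapClusterPt_radialFlux_zero (hN : 1 < N) (hv : IsDivFormRadialSol N m α β v) :
    MapClusterPt 0 (𝓝[>] 0) (radialFlux N m v) := by
  obtain ⟨l, hl, hderiv⟩ := hv.exists_ultrafilter_tendsto_deriv_zero
  refine mapClusterPt_iff_ultrafilter.2 ⟨l, hl, ?_⟩
  have hid : Tendsto (fun r : ℝ ↦ r) l (𝓝 0) := hl.trans nhdsWithin_le_nhds
  have hlim := (((hid.rpow_const (Or.inr (sub_pos.2 hN).le)).const_mul (N - 1)).mul
    ((hv.tendsto_nhdsGT_zero.mono_left hl).rpow_const (p := m - 1)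
      (Or.inl (hv.pos 0 le_rfl).ne'))).mul hderiv
  rwa [mul_zero] at hlim

theorem radialFlux_neg (hN : 1 < N) (hα : 0 < α) (hβ : 0 < β) (hαβ : m * α ≤ β * (N - 2))
    (hv : IsDivFormRadialSol N m α β v) (hr : 0 < r) : radialFlux N m v r < 0 := by
  have hanti := hv.strictAntiOn_radialFlux hN hα hβ hαβ
  by_contra! hflux
  have hhalf : 0 < radialFlux N m v (r / 2) :=
    hflux.trans_lt (hanti (half_pos hr) hr (half_lt_self hr))
  obtain ⟨x, hx, hx0, hxr⟩ := (((hv.mapClusterPt_radialFlux_zero hN).frequently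
    (gt_mem_nhds hhalf)).and_eventually (Ioo_mem_nhdsGT (half_pos hr))).exists
  exact (hanti hx0 (half_pos hr) hxr).not_gt hx

theorem deriv_neg (hN : 1 < N) (hα : 0 < α) (hβ : 0 < β) (hαβ : m * α ≤ β * (N - 2))
    (hv : IsDivFormRadialSol N m α β v) (hr : 0 < r) : deriv v r < 0 := by
  have hweight : 0 < (N - 1) * r ^ (N - 1) * v r ^ (m - 1) :=
    mul_pos (mul_pos (sub_pos.2 hN) (rpow_pos_of_pos hr _)) (rpow_pos_of_pos (hv.pos r hr.le) _)
  exact (pos_iff_neg_of_mul_neg (hv.radialFlux_neg hN hα hβ hαβ hr)).1 hweight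

theorem strictAntiOn (hN : 1 < N) (hα : 0 < α) (hβ : 0 < β) (hαβ : m * α ≤ β * (N - 2))
    (hv : IsDivFormRadialSol N m α β v) : StrictAntiOn v (Ici 0) :=
  strictAntiOn_of_deriv_neg (convex_Ici 0) hv.continuousOn fun r hr ↦
    hv.deriv_neg hN hα hβ hαβ (by simpa using hr)

theorem strictMonoOn_rpow_mul (hN : 1 < N) (hα : 0 < α) (hβ : 0 < β)
    (hαβ : m * α ≤ β * (N - 2)) (hv : IsDivFormRadialSol N m α β v) :
    StrictMonoOn (fun r ↦ r ^ (α / β) * v r) (Ici 0) := by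
  refine strictMonoOn_of_hasDerivWithinAt_pos
    (f' := fun r ↦ r ^ (α / β) / (β * r) * (α * v r + β * r * deriv v r)) (convex_Ici 0)
    ((continuousOn_id.rpow_const fun _ _ ↦ Or.inr (by positivity)).mul hv.continuousOn) ?_ ?_ <;>
  rw [interior_Ici] <;> intro r hr <;> have hr : 0 < r := hr
  · refine (((hasDerivAt_rpow_const (Or.inl hr.ne')).mul
      (hv.differentiableAt r hr).hasDerivAt).congr_deriv ?_).hasDerivWithinAt
    rw [rpow_sub_one hr.ne']
    field_simp
  · have := hv.mul_add_mul_deriv_pos hN hα hβ hαβ hr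
    positivity

end IsDivFormRadialSol

theorem stmt14_general {N m α β : ℝ} {v : ℝ → ℝ} (hN : 1 < N) (hβ : 0 < β) (hα : 0 < α)
    (hαβ : m * α ≤ β * (N - 2)) (hv : IsDivFormRadialSol N m α β v) :
    StrictAntiOn v (Ici 0) ∧
    (∀ r : ℝ, 0 ≤ r → 0 < v r ∧ v r ≤ v 0) ∧
    (∀ r₀ : ℝ, 0 < r₀ → ∀ r : ℝ, r₀ ≤ r →
      (r₀ ^ 2 * v r₀ ^ (2 * (β / α)) / r ^ 2) ^ (1 / (2 * (β / α))) ≤ v r) := by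
  have hanti := hv.strictAntiOn hN hα hβ hαβ
  refine ⟨hanti, fun r hr ↦ ⟨hv.pos r hr, hanti.antitoneOn self_mem_Ici hr hr⟩,
    fun r₀ hr₀ r hr ↦ ?_⟩
  have hr0 : 0 < r := hr₀.trans_le hr
  rw [sq_mul_rpow_div_sq_rpow_one_div hr₀.le (hv.pos r₀ hr₀.le).le hr0.le (by positivity),
    one_div_div, div_le_iff₀' (by positivity)]
  exact (hv.strictMonoOn_rpow_mul hN hα hβ hαβ).monotoneOn hr₀.le hr0.le hr

theorem stmt14 (n : ℕ) (hn : 3 ≤ n) (m α β η : ℝ) (hη : 0 < η)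
    (hm : 0 < m) (hm' : m ≤ ((n : ℝ) - 2) / n)
    (hβ : 0 < β) (hα : 0 < α) (hαβ : α ≤ β * ((n : ℝ) - 2) / m)
    (v : ℝ → ℝ) (hv : IsRadialSol n m α β η v) :
    StrictAntiOn v (Set.Ioi (0:ℝ)) ∧
    (∀ r : ℝ, 0 ≤ r → 0 < v r ∧ v r ≤ η) ∧
    (∀ r₀ : ℝ, 0 < r₀ → ∀ r : ℝ, r₀ ≤ r →
      (r₀ ^ 2 * v r₀ ^ (2 * (β / α)) / r ^ 2) ^ (1 / (2 * (β / α))) ≤ v r) := by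
  obtain ⟨hanti, hbound, hlower⟩ := stmt14_general (by exact_mod_cast (by lia : 1 < n)) hβ hα
    ((le_div_iff₀' hm).1 hαβ) (hv.isDivFormRadialSol hm.ne')
  exact ⟨hanti.mono Ioi_subset_Ici_self, hv.2.2.2.2.1 ▸ hbound, hlower⟩
end

section
/- Let n ≥ 3 be an integer, let η > 0, let m ∈ (0,1), let ρ₁ and β be real numbers, and let α = (2β + ρ₁)/(1−m). Let v be a radial solution of (E) on [0,∞), and define w : ℝ → ℝ by w(s) = e^{2s}·v(e^{s})^{1−m}. Then w is positive, twice continuously differentiable, and satisfies for all s ∈ ℝ: w''(s) = ((1−2m)/(1−m))·w'(s)²/w(s) − ((n−2−(n+2)m)/(1−m))·w'(s) − (β/(n−1))·w(s)·w'(s) − (ρ₁/(n−1))·w(s)² + (2(n−2−nm)/(1−m))·w(s). -/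
open Real Set Filter

/-!
In the variable `s = log r` the radial Laplacian becomes `r⁻² (∂ₛ² + (N - 2) ∂ₛ)`, and for every
positive `f` one has `f'' = f ((log f)'' + (log f)' ^ 2)`. Since `log (u ^ m) = m log u`, the
equation for `u(s) = v(eˢ)` is therefore a Riccati-type equation for `z = (log u)'`, whose only
other coefficient is `w = r² v ^ (1 - m)`:
`z' = -m z² - (N - 2) z - w (α + β z) / (N - 1)`.
As `(log w)' = 2 + (1 - m) z`, eliminating `z` from this equation gives the one for `w`.
-/

open scoped Topology

section LogDeriv

variable {𝕜 𝕜' : Type*} [NontriviallyNormedField 𝕜] [NontriviallyNormedField 𝕜']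
  [NormedAlgebra 𝕜 𝕜'] {f : 𝕜 → 𝕜'} {x : 𝕜}

theorem hasDerivAt_deriv_of_contDiffAt {E : Type*} [NormedAddCommGroup E] [NormedSpace 𝕜 E]
    {g : 𝕜 → E} (hg : ContDiffAt 𝕜 2 g x) : HasDerivAt (deriv g) (deriv (deriv g) x) x :=
  ((hg.derivWithin (m := 1) le_rfl).differentiableAt one_ne_zero).hasDerivAt

theorem deriv_eq_mul_logDeriv (hx : f x ≠ 0) : deriv f x = f x * logDeriv f x := by
  rw [logDeriv_apply, mul_div_cancel₀ _ hx]

theorem deriv_deriv_eq_mul_logDeriv (hf : ContDiffAt 𝕜 2 f x) (hx : f x ≠ 0) :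
    deriv (deriv f) x = f x * (deriv (logDeriv f) x + logDeriv f x ^ 2) := by
  have hf₁ : HasDerivAt f (deriv f x) x := (hf.differentiableAt two_ne_zero).hasDerivAt
  rw [logDeriv, ((hasDerivAt_deriv_of_contDiffAt hf).div hf₁ hx).deriv, Pi.div_apply]
  field_simp
  ring

end LogDeriv

section Rpow

variable {f : ℝ → ℝ} {x : ℝ}

theorem logDeriv_rpow_const (p : ℝ) (hf : DifferentiableAt ℝ f x) (hx : 0 < f x) :
    logDeriv (fun t ↦ f t ^ p) x = p * logDeriv f x := by
  rw [logDeriv_apply, logDeriv_apply, (hf.hasDerivAt.rpow_const (Or.inl hx.ne')).deriv,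
    rpow_sub_one hx.ne']
  field_simp

theorem logDeriv_exp_mul_rpow_const (a p : ℝ) (hf : DifferentiableAt ℝ f x) (hx : 0 < f x) :
    logDeriv (fun t ↦ exp (a * t) * f t ^ p) x = a + p * logDeriv f x := by
  have hexp : logDeriv (fun t ↦ exp (a * t)) x = a := by
    have h : HasDerivAt (fun t ↦ exp (a * t)) (exp (a * x) * a) x := by
      simpa using ((hasDerivAt_id x).const_mul a).exp
    rw [logDeriv_apply, h.deriv, mul_div_cancel_left₀ _ (exp_pos _).ne']
  rw [logDeriv_mul (f := fun t ↦ exp (a * t)) x (exp_pos _).ne' (rpow_pos_of_pos hx p).ne'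
    (by fun_prop) (hf.rpow_const (Or.inl hx.ne')), hexp, logDeriv_rpow_const p hf hx]

theorem deriv_logDeriv_exp_mul_rpow_const (a p : ℝ) (hf : ContDiffAt ℝ 1 f x) (hx : 0 < f x) :
    deriv (logDeriv fun t ↦ exp (a * t) * f t ^ p) x = p * deriv (logDeriv f) x := by
  have hlog : logDeriv (fun t ↦ exp (a * t) * f t ^ p) =ᶠ[𝓝 x] fun t ↦ a + p * logDeriv f t := by
    filter_upwards [hf.eventually (by simp), hf.continuousAt.eventually_const_lt hx] with t ht ht₀
    exact logDeriv_exp_mul_rpow_const a p (ht.differentiableAt one_ne_zero) ht₀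
  rw [hlog.deriv_eq, deriv_const_add, deriv_const_mul_field]

theorem deriv_logDeriv_rpow_const (p : ℝ) (hf : ContDiffAt ℝ 1 f x) (hx : 0 < f x) :
    deriv (logDeriv fun t ↦ f t ^ p) x = p * deriv (logDeriv f) x := by
  simpa only [zero_mul, exp_zero, one_mul] using deriv_logDeriv_exp_mul_rpow_const 0 p hf hx

end Rpow

/-- The Laplacian of the radial function `x ↦ f |x|` on `ℝᴺ`, as a function of the radius; the
dimension `N` may be any real number. -/
noncomputable def radialLaplacian (N : ℝ) (f : ℝ → ℝ) (r : ℝ) : ℝ :=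
  deriv (deriv f) r + (N - 1) / r * deriv f r

theorem exp_sq_mul_radialLaplacian (N : ℝ) {f : ℝ → ℝ} {s : ℝ} (hf : ContDiffAt ℝ 2 f (exp s)) :
    exp s ^ 2 * radialLaplacian N f (exp s) =
      deriv (deriv (f ∘ exp)) s + (N - 2) * deriv (f ∘ exp) s := by
  have hderiv {t : ℝ} (ht : ContDiffAt ℝ 2 f (exp t)) :
      deriv (f ∘ exp) t = deriv f (exp t) * exp t :=
    ((ht.differentiableAt two_ne_zero).hasDerivAt.comp t (hasDerivAt_exp t)).deriv
  have hderiv_near : deriv (f ∘ exp) =ᶠ[𝓝 s] fun t ↦ deriv f (exp t) * exp t :=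
    (continuous_exp.continuousAt.eventually (hf.eventually (by simp))).mono fun _ ↦ hderiv
  have hderiv₂ : HasDerivAt (fun t ↦ deriv f (exp t) * exp t)
      (deriv (deriv f) (exp s) * exp s * exp s + deriv f (exp s) * exp s) s :=
    ((hasDerivAt_deriv_of_contDiffAt hf).comp s (hasDerivAt_exp s)).mul (hasDerivAt_exp s)
  rw [hderiv_near.deriv_eq, hderiv hf, hderiv₂.deriv, radialLaplacian]
  have := (exp_pos s).ne'
  field_simp
  ring

theorem exp_sq_mul_radialLaplacian_rpow (N m : ℝ) {f : ℝ → ℝ} {s : ℝ}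
    (hf : ContDiffAt ℝ 2 f (exp s)) (hpos : 0 < f (exp s)) :
    exp s ^ 2 * radialLaplacian N (fun r ↦ f r ^ m) (exp s) =
      m * f (exp s) ^ m * (deriv (logDeriv (f ∘ exp)) s + m * logDeriv (f ∘ exp) s ^ 2
        + (N - 2) * logDeriv (f ∘ exp) s) := by
  have hu : ContDiffAt ℝ 2 (f ∘ exp) s := hf.comp s contDiff_exp.contDiffAt
  have hum : ContDiffAt ℝ 2 (fun t ↦ (f ∘ exp) t ^ m) s := hu.rpow_const_of_ne hpos.ne'
  have hum_ne : (f ∘ exp) s ^ m ≠ 0 := (rpow_pos_of_pos hpos m).ne'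
  calc
    _ = deriv (deriv fun t ↦ (f ∘ exp) t ^ m) s + (N - 2) * deriv (fun t ↦ (f ∘ exp) t ^ m) s :=
      exp_sq_mul_radialLaplacian N (hf.rpow_const_of_ne hpos.ne')
    _ = _ := by
      rw [deriv_deriv_eq_mul_logDeriv hum hum_ne,
        deriv_eq_mul_logDeriv (f := fun t ↦ (f ∘ exp) t ^ m) hum_ne,
        logDeriv_rpow_const m (hu.differentiableAt two_ne_zero) hpos,
        deriv_logDeriv_rpow_const m (hu.of_le one_le_two) hpos, Function.comp_apply]
      ring

/-- The function `w(s) = r²v(r)^{1-m}`, `r = eˢ`: the profile `v` in the logarithmic radial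
variable, scaled so that its equation is autonomous. -/
noncomputable def logProfile (m : ℝ) (v : ℝ → ℝ) (s : ℝ) : ℝ :=
  exp (2 * s) * v (exp s) ^ (1 - m)

section LogProfile

variable {N m α β s : ℝ} {v : ℝ → ℝ}

theorem contDiffAt_logProfile {k : WithTop ℕ∞} (hv : ContDiffAt ℝ k v (exp s))
    (hne : v (exp s) ≠ 0) : ContDiffAt ℝ k (logProfile m v) s := by
  have hexp : ContDiffAt ℝ k (fun t ↦ exp (2 * t)) s := by fun_prop
  exact hexp.mul ((hv.comp s contDiff_exp.contDiffAt).rpow_const_of_ne hne)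

theorem logProfile_pos (hpos : 0 < v (exp s)) : 0 < logProfile m v s :=
  mul_pos (exp_pos _) (rpow_pos_of_pos hpos _)

theorem exp_sq_mul_eq_logProfile_mul_rpow (hpos : 0 < v (exp s)) :
    exp s ^ 2 * v (exp s) = logProfile m v s * v (exp s) ^ m := by
  rw [logProfile, mul_assoc, ← rpow_add hpos, sub_add_cancel, rpow_one, two_mul, exp_add, sq]

theorem deriv_logDeriv_comp_exp_of_radialLaplacian (hN : N ≠ 1) (hm : m ≠ 0)
    (hv : ContDiffAt ℝ 2 v (exp s)) (hpos : 0 < v (exp s))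
    (hode : (N - 1) / m * radialLaplacian N (fun r ↦ v r ^ m) (exp s) + α * v (exp s)
      + β * exp s * deriv v (exp s) = 0) :
    deriv (logDeriv (v ∘ exp)) s =
      -m * logDeriv (v ∘ exp) s ^ 2 - (N - 2) * logDeriv (v ∘ exp) s
        - logProfile m v s * (α + β * logDeriv (v ∘ exp) s) / (N - 1) := by
  have hlap := exp_sq_mul_radialLaplacian_rpow N m hv hpos
  have hscale := exp_sq_mul_eq_logProfile_mul_rpow (m := m) hpos
  have hdrift : exp s * deriv v (exp s) = v (exp s) * logDeriv (v ∘ exp) s := by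
    rw [logDeriv_comp (hv.differentiableAt two_ne_zero) differentiableAt_exp, Real.deriv_exp,
      deriv_eq_mul_logDeriv hpos.ne']
    ring
  set z := logDeriv (v ∘ exp)
  have hriccati : v (exp s) ^ m * ((N - 1) * (deriv z s + m * z s ^ 2 + (N - 2) * z s)
      + logProfile m v s * (α + β * z s)) = 0 := by
    calc
      _ = (N - 1) / m * (m * v (exp s) ^ m * (deriv z s + m * z s ^ 2 + (N - 2) * z s))
          + logProfile m v s * v (exp s) ^ m * (α + β * z s) := by field_simp
      _ = exp s ^ 2 * ((N - 1) / m * radialLaplacian N (fun r ↦ v r ^ m) (exp s) + α * v (exp s)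
          + β * exp s * deriv v (exp s)) := by
        rw [← hlap, ← hscale]
        linear_combination -β * exp s ^ 2 * hdrift
      _ = 0 := by rw [hode, mul_zero]
  have hbracket := (mul_eq_zero.1 hriccati).resolve_left (rpow_pos_of_pos hpos m).ne'
  have hN' := sub_ne_zero.2 hN
  field_simp
  linear_combination hbracket

end LogProfile

theorem stmt16_general (N m α β ρ₁ : ℝ) (hN : N ≠ 1) (hm : m ≠ 0) (hm1 : m ≠ 1)
    (hα : α = (2 * β + ρ₁) / (1 - m)) (v : ℝ → ℝ) (s : ℝ)
    (hv : ContDiffAt ℝ 2 v (exp s)) (hpos : 0 < v (exp s))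
    (hode : (N - 1) / m * radialLaplacian N (fun r ↦ v r ^ m) (exp s) + α * v (exp s)
      + β * exp s * deriv v (exp s) = 0) :
    0 < logProfile m v s ∧
    ContDiffAt ℝ 2 (logProfile m v) s ∧
    deriv (deriv (logProfile m v)) s
      = ((1 - 2 * m) / (1 - m)) * (deriv (logProfile m v) s) ^ 2 / logProfile m v s
        - ((N - 2 - (N + 2) * m) / (1 - m)) * deriv (logProfile m v) s
        - (β / (N - 1)) * logProfile m v s * deriv (logProfile m v) s
        - (ρ₁ / (N - 1)) * (logProfile m v s) ^ 2
        + (2 * (N - 2 - N * m) / (1 - m)) * logProfile m v s := by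
  have hw_pos : 0 < logProfile m v s := logProfile_pos hpos
  have hw₂ : ContDiffAt ℝ 2 (logProfile m v) s := contDiffAt_logProfile hv hpos.ne'
  refine ⟨hw_pos, hw₂, ?_⟩
  have hu₂ : ContDiffAt ℝ 2 (v ∘ exp) s := hv.comp s contDiff_exp.contDiffAt
  have hlog : logDeriv (logProfile m v) s = 2 + (1 - m) * logDeriv (v ∘ exp) s :=
    logDeriv_exp_mul_rpow_const 2 (1 - m) (hu₂.differentiableAt two_ne_zero) hpos
  have hlog' : deriv (logDeriv (logProfile m v)) s = (1 - m) * deriv (logDeriv (v ∘ exp)) s :=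
    deriv_logDeriv_exp_mul_rpow_const 2 (1 - m) (hu₂.of_le one_le_two) hpos
  rw [deriv_deriv_eq_mul_logDeriv hw₂ hw_pos.ne', deriv_eq_mul_logDeriv hw_pos.ne', hlog', hlog,
    deriv_logDeriv_comp_exp_of_radialLaplacian hN hm hv hpos hode, hα]
  have hN' := sub_ne_zero.2 hN
  have hm' := sub_ne_zero.2 hm1.symm
  field_simp
  ring

theorem stmt16 (n : ℕ) (hn : 3 ≤ n) (m α β η ρ₁ : ℝ) (hη : 0 < η)
    (hm : 0 < m) (hm1 : m < 1) (hα : α = (2 * β + ρ₁) / (1 - m))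
    (v : ℝ → ℝ) (hv : IsRadialSol n m α β η v)
    (w : ℝ → ℝ)
    (hw : ∀ s : ℝ, w s = Real.exp (2 * s) * v (Real.exp s) ^ (1 - m)) :
    (∀ s : ℝ, 0 < w s) ∧
    ContDiff ℝ 2 w ∧
    (∀ s : ℝ, deriv (deriv w) s
      = ((1 - 2 * m) / (1 - m)) * (deriv w s) ^ 2 / w s
        - (((n : ℝ) - 2 - ((n : ℝ) + 2) * m) / (1 - m)) * deriv w s
        - (β / ((n : ℝ) - 1)) * w s * deriv w s
        - (ρ₁ / ((n : ℝ) - 1)) * (w s) ^ 2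
        + (2 * ((n : ℝ) - 2 - (n : ℝ) * m) / (1 - m)) * w s) := by
  obtain rfl : w = logProfile m v := funext hw
  obtain ⟨hpos, -, hC, -, -, hode⟩ := hv
  have hlocal (s : ℝ) := stmt16_general n m α β ρ₁ (by norm_cast; lia) hm.ne' hm1.ne hα v s
    (hC.contDiffAt (Ioi_mem_nhds (exp_pos s))) (hpos _ (exp_pos s).le) (hode _ (exp_pos s))
  exact ⟨fun s ↦ (hlocal s).1, contDiff_iff_contDiffAt.2 fun s ↦ (hlocal s).2.1,
    fun s ↦ (hlocal s).2.2⟩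
end

section
/- Let n ≥ 3 be an integer, let η > 0, and let m, α, β satisfy 0 < m < (n−2)/n and 2β/(1−m) > α > 0. Let v be a radial solution of (E) on [0,∞) and set q(r) = r^{α/β}·v(r). Then q'(r) > 0 for all r > 0, and for every p with 1 < p < 3 − (α/β)·(1−m), lim_{r→∞} r^{p}·q'(r)/q(r) = 0. -/
open Real Set Filter

/-!
In the variable `log r`, the logarithmic derivative `P = r q' / q` satisfies a Riccati equation.
With `k = α / β` it reads

  `r P' = (n - 2) (k - P) - m (k - P)² - (β / (n - 1)) r² v^(1 - m) P`.

The mean value theorem on `[0, r]` gives points near `0` with `P > 0`, because `q 0 = 0`. As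
`r P' = k (n - 2 - m k) > 0` wherever `P = 0`, positivity persists, so `q` is increasing. Hence
`r² v^(1 - m) = r^δ q^(1 - m) ≥ c r^δ` with `δ = 2 - k (1 - m) > 0`, and the last term of the
equation damps `P` strongly enough to give `P = O(r^(-δ))`.
-/

open Asymptotics
open scoped Topology

/-! ### Differential inequalities -/

section DifferentialInequalities

lemma le_const_of_deriv_neg_of_eq {f f' : ℝ → ℝ} {a b : ℝ}
    (hf : ∀ x, a ≤ x → HasDerivAt f (f' x) x) (ha : f a ≤ b)
    (hb : ∀ x, a ≤ x → f x = b → f' x < 0) {x : ℝ} (hx : a ≤ x) : f x ≤ b :=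
  image_le_of_deriv_right_lt_deriv_boundary' (B := fun _ => b) (B' := fun _ => 0)
    (fun y hy => (hf y hy.1).continuousAt.continuousWithinAt)
    (fun y hy => (hf y hy.1).hasDerivWithinAt) ha continuousOn_const
    (fun _ _ => hasDerivWithinAt_const _ _ _) (fun y hy => hb y hy.1) (right_mem_Icc.2 hx)

lemma pos_of_deriv_pos_of_eq_zero {f f' : ℝ → ℝ} {a : ℝ}
    (hf : ∀ x, a ≤ x → HasDerivAt f (f' x) x) (ha : 0 < f a)
    (h0 : ∀ x, a ≤ x → f x = 0 → 0 < f' x) {x : ℝ} (hx : a ≤ x) : 0 < f x := by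
  have nonneg : ∀ y, a ≤ y → 0 ≤ f y := fun y hy => neg_nonpos.1 <|
    le_const_of_deriv_neg_of_eq (fun z hz => (hf z hz).neg) (neg_nonpos.2 ha.le)
      (fun z hz hfz => neg_neg_of_pos (h0 z hz (neg_eq_zero.1 hfz))) hy
  refine (nonneg x hx).lt_of_ne' fun hfx => ?_
  have hax : a < x := hx.lt_of_ne fun h => ha.ne' (h ▸ hfx)
  have hmin : IsLocalMin f x := by
    filter_upwards [Ioi_mem_nhds hax] with y hy
    simpa only [hfx] using nonneg y hy.le
  exact (h0 x hx hfx).ne' (hmin.hasDerivAt_eq_zero (hf x hx))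

variable {y y' : ℝ → ℝ} {A C δ : ℝ}

lemma exists_eventually_rpow_mul_le_of_deriv_le (hδ : 0 < δ) (hC : 0 < C)
    (hy : ∀ᶠ r in atTop, HasDerivAt y (y' r) r)
    (hle : ∀ᶠ r in atTop, r * y' r ≤ A - C * r ^ δ * y r) :
    ∃ K, ∀ᶠ r in atTop, r ^ δ * y r ≤ K := by
  obtain ⟨a, ha⟩ := eventually_atTop.1 <| hy.and <| hle.and <| (eventually_gt_atTop 0).and <|
    (tendsto_rpow_atTop hδ).eventually_ge_atTop (2 * δ / C)
  set K := max (a ^ δ * y a) (max (2 * A / C + 1) 1)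
  have hK0 : 0 < K := by simp [K]
  have hAK : 2 * A < C * K := by
    have : 2 * A / C < K := (lt_add_one _).trans_le (by simp [K])
    rwa [div_lt_iff₀' hC] at this
  have hderiv : ∀ r, a ≤ r →
      HasDerivAt (fun r => r ^ δ * y r) (r ^ δ / r * (δ * y r + r * y' r)) r := by
    intro r hr
    obtain ⟨hyr, -, hr0, -⟩ := ha r hr
    refine ((hasDerivAt_rpow_const (Or.inl hr0.ne')).mul hyr).congr_deriv ?_
    rw [rpow_sub_one hr0.ne']
    field_simp
  refine ⟨K, eventually_atTop.2 ⟨a, fun r hr =>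
    le_const_of_deriv_neg_of_eq hderiv (le_max_left _ _) (fun s hs hsK => ?_) hr⟩⟩
  obtain ⟨-, hys, hs0, hs⟩ := ha s hs
  have hpow : 0 < s ^ δ := rpow_pos_of_pos hs0 δ
  have hy0 : 0 < y s := pos_of_mul_pos_right (hsK ▸ hK0) hpow.le
  have hdamp : 2 * δ * y s ≤ C * K := by
    rw [div_le_iff₀' hC] at hs
    calc 2 * δ * y s ≤ C * s ^ δ * y s := mul_le_mul_of_nonneg_right hs hy0.le
      _ = C * K := by rw [mul_assoc, hsK]
  refine mul_neg_of_pos_of_neg (div_pos hpow hs0) ?_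
  rw [mul_assoc, hsK] at hys
  linarith

lemma isBigO_rpow_neg_of_deriv_le (hδ : 0 < δ) (hC : 0 < C)
    (hy : ∀ᶠ r in atTop, HasDerivAt y (y' r) r) (hy0 : ∀ᶠ r in atTop, 0 ≤ y r)
    (hle : ∀ᶠ r in atTop, r * y' r ≤ A - C * r ^ δ * y r) :
    y =O[atTop] fun r => r ^ (-δ) := by
  obtain ⟨K, hK⟩ := exists_eventually_rpow_mul_le_of_deriv_le hδ hC hy hle
  refine IsBigO.of_bound K ?_
  filter_upwards [hK, hy0, eventually_gt_atTop 0] with r hrK hr0 hr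
  rw [norm_of_nonneg hr0, norm_of_nonneg (rpow_nonneg hr.le _), rpow_neg hr.le,
    ← div_eq_mul_inv, le_div_iff₀' (rpow_pos_of_pos hr δ)]
  exact hrK

end DifferentialInequalities

lemma tendsto_rpow_mul_of_isBigO_rpow_neg {f : ℝ → ℝ} {s t : ℝ}
    (hf : f =O[atTop] fun r => r ^ (-t)) (hst : s < t) :
    Tendsto (fun r => r ^ s * f r) atTop (𝓝 0) := by
  refine ((isBigO_refl (fun r : ℝ => r ^ s) atTop).mul hf).trans_tendsto ?_
  refine (tendsto_rpow_neg_atTop (sub_pos.2 hst)).congr' ?_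
  filter_upwards [eventually_gt_atTop 0] with r hr
  rw [← rpow_add hr]
  ring_nf

lemma deriv_deriv_rpow_const {f : ℝ → ℝ} {x p : ℝ} (hf : ∀ᶠ y in 𝓝 x, DifferentiableAt ℝ f y)
    (hf' : DifferentiableAt ℝ (deriv f) x) (hx : f x ≠ 0) :
    deriv (deriv fun y => f y ^ p) x =
      p * (deriv (deriv f) x + (p - 1) * deriv f x ^ 2 / f x) * f x ^ (p - 1) := by
  have hderiv : deriv (fun y => f y ^ p) =ᶠ[𝓝 x] fun y => deriv f y * p * f y ^ (p - 1) := by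
    filter_upwards [hf, hf.self_of_nhds.continuousAt.eventually_ne hx] with y hy hy0
    exact deriv_rpow_const hy (Or.inl hy0)
  have hderiv2 := (hf'.hasDerivAt.mul_const p).fun_mul
    (hf.self_of_nhds.hasDerivAt.rpow_const (p := p - 1) (Or.inl hx))
  rw [hderiv.deriv_eq, hderiv2.deriv, rpow_sub_one hx (p - 1)]
  ring

/-! ### Logarithmic slope -/

/-- The slope `r f'(r) / f(r)` of `log f` with respect to `log r`, the quantity for which the
equation of `IsRadialSol` becomes a first-order (Riccati) equation. -/
noncomputable def logSlope (f : ℝ → ℝ) (r : ℝ) : ℝ := r * logDeriv f r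

lemma logSlope_pos_iff {f : ℝ → ℝ} {r : ℝ} (hr : 0 < r) (hf : 0 < f r) :
    0 < logSlope f r ↔ 0 < deriv f r := by
  rw [logSlope, logDeriv_apply, mul_pos_iff_of_pos_left hr, div_pos_iff_of_pos_right hf]

lemma hasDerivAt_logSlope {f : ℝ → ℝ} {r : ℝ} (hf : DifferentiableAt ℝ f r)
    (hf' : DifferentiableAt ℝ (deriv f) r) (hr : r ≠ 0) (h0 : f r ≠ 0) :
    HasDerivAt (logSlope f)
      ((logSlope f r + r ^ 2 * deriv (deriv f) r / f r - logSlope f r ^ 2) / r) r := by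
  refine ((hasDerivAt_id' r).mul (hf'.hasDerivAt.div hf.hasDerivAt h0)).congr_deriv ?_
  simp only [logSlope, logDeriv_apply, Pi.div_apply]
  field_simp
  ring

/-- The function `q(r) = r ^ k * v(r)`, which for `k = α / β` compensates the decay of a radial
solution `v`. -/
noncomputable def rescaledProfile (k : ℝ) (v : ℝ → ℝ) (r : ℝ) : ℝ := r ^ k * v r

lemma rescaledProfile_pos {k r : ℝ} {v : ℝ → ℝ} (hr : 0 < r) (hv : 0 < v r) :
    0 < rescaledProfile k v r :=
  mul_pos (rpow_pos_of_pos hr k) hv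

lemma logSlope_rescaledProfile {k r : ℝ} {v : ℝ → ℝ} (hr : 0 < r) (hv : v r ≠ 0)
    (hd : DifferentiableAt ℝ v r) :
    logSlope (rescaledProfile k v) r = k + logSlope v r := by
  have hpow : logDeriv (fun s : ℝ => s ^ k) r = k / r := by
    rw [logDeriv_apply, Real.deriv_rpow_const, rpow_sub_one hr.ne']
    have := (rpow_pos_of_pos hr k).ne'
    field_simp
  have hmul := logDeriv_mul r (rpow_pos_of_pos hr k).ne' hv
    (hasDerivAt_rpow_const (Or.inl hr.ne')).differentiableAt hd
  unfold logSlope rescaledProfile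
  rw [hmul, hpow, mul_add, mul_div_cancel₀ k hr.ne']

lemma continuousOn_rescaledProfile {k : ℝ} {v : ℝ → ℝ} {s : Set ℝ} (hk : 0 ≤ k)
    (hv : ContinuousOn v s) : ContinuousOn (rescaledProfile k v) s :=
  (continuous_rpow_const hk).continuousOn.mul hv

lemma sq_mul_rpow_eq_rpow_mul_rescaledProfile {k m r : ℝ} {v : ℝ → ℝ} (hr : 0 < r)
    (hv : 0 ≤ v r) :
    r ^ 2 * v r ^ (1 - m) = r ^ (2 - k * (1 - m)) * rescaledProfile k v r ^ (1 - m) := by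
  rw [rescaledProfile, mul_rpow (rpow_nonneg hr.le k) hv, ← rpow_mul hr.le, ← mul_assoc,
    ← rpow_add hr, sub_add_cancel, rpow_two]

/-! ### Radial solutions -/

namespace IsRadialSol

variable {n : ℕ} {m α β η : ℝ} {v : ℝ → ℝ} {r : ℝ}

lemma pos (hv : IsRadialSol n m α β η v) (hr : 0 ≤ r) : 0 < v r := hv.1 r hr

lemma continuousOn (hv : IsRadialSol n m α β η v) : ContinuousOn v (Ici 0) := hv.2.1

lemma contDiffOn (hv : IsRadialSol n m α β η v) : ContDiffOn ℝ 2 v (Ioi 0) := hv.2.2.1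

lemma differentiableAt (hv : IsRadialSol n m α β η v) (hr : 0 < r) : DifferentiableAt ℝ v r :=
  (hv.contDiffOn.differentiableOn two_ne_zero).differentiableAt (Ioi_mem_nhds hr)

lemma differentiableAt_deriv (hv : IsRadialSol n m α β η v) (hr : 0 < r) :
    DifferentiableAt ℝ (deriv v) r :=
  ((hv.contDiffOn.deriv_of_isOpen isOpen_Ioi one_add_one_eq_two.le).differentiableOn
    one_ne_zero).differentiableAt (Ioi_mem_nhds hr)

lemma sq_mul_deriv_deriv_div (hv : IsRadialSol n m α β η v) (hn : n ≠ 1) (hm : m ≠ 0)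
    (hr : 0 < r) :
    r ^ 2 * deriv (deriv v) r / v r = (1 - m) * logSlope v r ^ 2 - (n - 1) * logSlope v r
      - r ^ 2 * v r ^ (1 - m) * (α + β * logSlope v r) / (n - 1) := by
  have hv0 := hv.pos hr.le
  have hn1 : (n : ℝ) - 1 ≠ 0 := sub_ne_zero.2 (by exact_mod_cast hn)
  have hpow : v r ^ (m - 1) = (v r ^ (1 - m))⁻¹ := by rw [← rpow_neg hv0.le, neg_sub]
  have hode := hv.2.2.2.2.2 r hr
  rw [deriv_deriv_rpow_const
      (by filter_upwards [Ioi_mem_nhds hr] with s hs using hv.differentiableAt hs)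
      (hv.differentiableAt_deriv hr) hv0.ne',
    deriv_rpow_const (hv.differentiableAt hr) (Or.inl hv0.ne'), hpow] at hode
  have hX : v r ^ (1 - m) ≠ 0 := (rpow_pos_of_pos hv0 _).ne'
  simp only [logSlope, logDeriv_apply]
  field_simp at hode ⊢
  linear_combination hode

lemma hasDerivAt_logSlope (hv : IsRadialSol n m α β η v) (hn : n ≠ 1) (hm : m ≠ 0)
    (hr : 0 < r) :
    HasDerivAt (logSlope v) ((-(n - 2) * logSlope v r - m * logSlope v r ^ 2
      - r ^ 2 * v r ^ (1 - m) * (α + β * logSlope v r) / (n - 1)) / r) r := by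
  refine (_root_.hasDerivAt_logSlope (hv.differentiableAt hr) (hv.differentiableAt_deriv hr)
    hr.ne' (hv.pos hr.le).ne').congr_deriv ?_
  rw [hv.sq_mul_deriv_deriv_div hn hm hr]
  ring

lemma hasDerivAt_logSlope_rescaledProfile (hv : IsRadialSol n m α β η v) (hn : n ≠ 1)
    (hm : m ≠ 0) (hβ : β ≠ 0) (hr : 0 < r) :
    HasDerivAt (logSlope (rescaledProfile (α / β) v))
      (((n - 2) * (α / β - logSlope (rescaledProfile (α / β) v) r)
        - m * (α / β - logSlope (rescaledProfile (α / β) v) r) ^ 2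
        - β / (n - 1) * (r ^ 2 * v r ^ (1 - m)) * logSlope (rescaledProfile (α / β) v) r) / r)
      r := by
  have heq : ∀ s, 0 < s → logSlope (rescaledProfile (α / β) v) s = α / β + logSlope v s :=
    fun s hs => logSlope_rescaledProfile hs (hv.pos hs.le).ne' (hv.differentiableAt hs)
  have hcongr : logSlope (rescaledProfile (α / β) v) =ᶠ[𝓝 r] fun s => α / β + logSlope v s := by
    filter_upwards [Ioi_mem_nhds hr] with s hs using heq s hs
  refine (((hv.hasDerivAt_logSlope hn hm hr).const_add (α / β)).congr_of_eventuallyEq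
    hcongr).congr_deriv ?_
  rw [heq r hr]
  field_simp
  ring

lemma exists_logSlope_rescaledProfile_pos {k : ℝ} (hv : IsRadialSol n m α β η v) (hk : 0 < k)
    (hr : 0 < r) : ∃ s ∈ Ioo 0 r, 0 < logSlope (rescaledProfile k v) s := by
  have hdiff : DifferentiableOn ℝ (rescaledProfile k v) (Ioo 0 r) := fun s hs =>
    ((hasDerivAt_rpow_const (Or.inl hs.1.ne')).differentiableAt.mul
      (hv.differentiableAt hs.1)).differentiableWithinAt
  obtain ⟨s, hs, hslope⟩ := exists_deriv_eq_slope (rescaledProfile k v) hr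
    (continuousOn_rescaledProfile hk.le (hv.continuousOn.mono Icc_subset_Ici_self)) hdiff
  have hzero : rescaledProfile k v 0 = 0 := by rw [rescaledProfile, zero_rpow hk.ne', zero_mul]
  refine ⟨s, hs, (logSlope_pos_iff hs.1 (rescaledProfile_pos hs.1 (hv.pos hs.1.le))).2 ?_⟩
  rw [hslope, hzero, sub_zero, sub_zero]
  exact div_pos (rescaledProfile_pos hr (hv.pos hr.le)) hr

lemma logSlope_rescaledProfile_pos (hv : IsRadialSol n m α β η v) (hn : n ≠ 1) (hm : m ≠ 0)
    (hk : 0 < α / β) (hmk : m * (α / β) < n - 2) (hr : 0 < r) :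
    0 < logSlope (rescaledProfile (α / β) v) r := by
  have hβ : β ≠ 0 := (div_ne_zero_iff.1 hk.ne').2
  obtain ⟨s, ⟨hs, hsr⟩, hpos⟩ := hv.exists_logSlope_rescaledProfile_pos hk hr
  refine pos_of_deriv_pos_of_eq_zero
    (fun x hx => hv.hasDerivAt_logSlope_rescaledProfile hn hm hβ (hs.trans_le hx)) hpos
    (fun x hx hzero => div_pos ?_ (hs.trans_le hx)) hsr.le
  rw [hzero]
  linarith [mul_pos hk (sub_pos.2 hmk)]

lemma deriv_rescaledProfile_pos (hv : IsRadialSol n m α β η v) (hn : n ≠ 1) (hm : m ≠ 0)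
    (hk : 0 < α / β) (hmk : m * (α / β) < n - 2) (hr : 0 < r) :
    0 < deriv (rescaledProfile (α / β) v) r :=
  (logSlope_pos_iff hr (rescaledProfile_pos hr (hv.pos hr.le))).1
    (hv.logSlope_rescaledProfile_pos hn hm hk hmk hr)

lemma strictMonoOn_rescaledProfile (hv : IsRadialSol n m α β η v) (hn : n ≠ 1) (hm : m ≠ 0)
    (hk : 0 < α / β) (hmk : m * (α / β) < n - 2) :
    StrictMonoOn (rescaledProfile (α / β) v) (Ici 0) :=
  strictMonoOn_of_deriv_pos (convex_Ici 0) (continuousOn_rescaledProfile hk.le hv.continuousOn)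
    fun r hr => hv.deriv_rescaledProfile_pos hn hm hk hmk (by simpa using hr)

lemma mul_rpow_le_sq_mul_rpow (hv : IsRadialSol n m α β η v) (hn : n ≠ 1) (hm : m ≠ 0)
    (hm1 : m ≤ 1) (hk : 0 < α / β) (hmk : m * (α / β) < n - 2) (hr : 1 ≤ r) :
    v 1 ^ (1 - m) * r ^ (2 - α / β * (1 - m)) ≤ r ^ 2 * v r ^ (1 - m) := by
  have hr0 : 0 < r := one_pos.trans_le hr
  have hmono : v 1 ≤ rescaledProfile (α / β) v r := by
    simpa [rescaledProfile] using
      (hv.strictMonoOn_rescaledProfile hn hm hk hmk).monotoneOn (mem_Ici.2 zero_le_one) hr0.le hr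
  rw [sq_mul_rpow_eq_rpow_mul_rescaledProfile (k := α / β) hr0 (hv.pos hr0.le).le, mul_comm]
  have hv1 : 0 ≤ v 1 := (hv.pos zero_le_one).le
  gcongr

lemma isBigO_logSlope_rescaledProfile (hv : IsRadialSol n m α β η v) (hm : 0 < m) (hm1 : m ≤ 1)
    (hα : 0 < α) (hβ : 0 < β) (hαβ : α / β * (1 - m) < 2) (hmk : m * (α / β) < n - 2) :
    logSlope (rescaledProfile (α / β) v) =O[atTop] fun r => r ^ (-(2 - α / β * (1 - m))) := by
  have hk : 0 < α / β := div_pos hα hβ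
  have hn2 : (0 : ℝ) < n - 2 := (mul_pos hm hk).trans hmk
  have hn : n ≠ 1 := by rintro rfl; norm_num at hn2
  have hc : 0 < β / ((n : ℝ) - 1) := div_pos hβ (by linarith)
  have hpos : ∀ r, 0 < r → 0 < logSlope (rescaledProfile (α / β) v) r := fun r hr =>
    hv.logSlope_rescaledProfile_pos hn hm.ne' hk hmk hr
  refine isBigO_rpow_neg_of_deriv_le (A := (n - 2) * (α / β))
    (C := β / (n - 1) * v 1 ^ (1 - m)) (sub_pos.2 hαβ)
    (mul_pos hc (rpow_pos_of_pos (hv.pos zero_le_one) _))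
    ((eventually_gt_atTop 0).mono fun r hr =>
      hv.hasDerivAt_logSlope_rescaledProfile hn hm.ne' hβ.ne' hr)
    ((eventually_gt_atTop 0).mono fun r hr => (hpos r hr).le) ?_
  filter_upwards [eventually_ge_atTop 1] with r hr
  have hr0 : 0 < r := one_pos.trans_le hr
  have hP := hpos r hr0
  have hdamp := mul_le_mul_of_nonneg_left
    (hv.mul_rpow_le_sq_mul_rpow hn hm.ne' hm1 hk hmk hr) (mul_pos hc hP).le
  have hsq := mul_nonneg hm.le (sq_nonneg (α / β - logSlope (rescaledProfile (α / β) v) r))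
  rw [mul_div_cancel₀ _ hr0.ne']
  linarith [mul_pos hn2 hP]

end IsRadialSol

lemma lt_one_of_lt_sub_two_div {n : ℕ} {m : ℝ} (hm : m < ((n : ℝ) - 2) / n) : m < 1 :=
  hm.trans_le (div_le_one_of_le₀ (by linarith) n.cast_nonneg)

lemma mul_lt_sub_two_mul_of_lt_sub_two_div {n : ℕ} {m α β : ℝ} (hm : 0 < m)
    (hmn : m < ((n : ℝ) - 2) / n) (hα : 0 < α) (hαβ : α * (1 - m) < 2 * β) :
    m * α < (n - 2) * β := by
  have hn : (0 : ℝ) < n := n.cast_nonneg.lt_of_ne fun h => by simp [← h, hm.not_gt] at hmn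
  have hmn' : m * n < n - 2 := (lt_div_iff₀ hn).1 hmn
  have hn2 : (0 : ℝ) < n - 2 := (mul_pos hm hn).trans hmn'
  have hscaled := mul_lt_mul_of_pos_left hαβ hn2
  have hgap := mul_pos hα (sub_pos.2 hmn')
  linarith

theorem stmt17_general (n : ℕ) (m α β η : ℝ) (hm : 0 < m) (hm1 : m ≤ 1) (hα : 0 < α)
    (hαβ : α * (1 - m) < 2 * β) (hmα : m * α < (n - 2) * β)
    (v : ℝ → ℝ) (hv : IsRadialSol n m α β η v)
    (q : ℝ → ℝ) (hq : ∀ r : ℝ, q r = r ^ (α / β) * v r) :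
    (∀ r : ℝ, 0 < r → 0 < deriv q r) ∧
    (∀ p : ℝ, p < 3 - (α / β) * (1 - m) →
      Tendsto (fun r : ℝ => r ^ p * deriv q r / q r) atTop (nhds 0)) := by
  obtain rfl : q = rescaledProfile (α / β) v := funext hq
  have hβ : 0 < β := by linarith [mul_nonneg hα.le (sub_nonneg.2 hm1)]
  have hk : 0 < α / β := div_pos hα hβ
  have hk2 : α / β * (1 - m) < 2 := by rwa [div_mul_eq_mul_div, div_lt_iff₀ hβ]
  have hmk : m * (α / β) < n - 2 := by rwa [← mul_div_assoc, div_lt_iff₀ hβ]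
  have hn2 : (0 : ℝ) < n - 2 := (mul_pos hm hk).trans hmk
  have hn : n ≠ 1 := by rintro rfl; norm_num at hn2
  refine ⟨fun r hr => hv.deriv_rescaledProfile_pos hn hm.ne' hk hmk hr, fun p hp => ?_⟩
  refine (tendsto_rpow_mul_of_isBigO_rpow_neg (s := p - 1)
    (hv.isBigO_logSlope_rescaledProfile hm hm1 hα hβ hk2 hmk) (by linarith)).congr' ?_
  filter_upwards [eventually_gt_atTop 0] with r hr
  rw [logSlope, logDeriv_apply, ← mul_assoc, ← rpow_add_one hr.ne', sub_add_cancel, mul_div_assoc]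

theorem stmt17 (n : ℕ) (hn : 3 ≤ n) (m α β η : ℝ) (hη : 0 < η)
    (hm : 0 < m) (hm' : m < ((n : ℝ) - 2) / n)
    (hα : 0 < α) (hαβ : α < 2 * β / (1 - m))
    (v : ℝ → ℝ) (hv : IsRadialSol n m α β η v)
    (q : ℝ → ℝ) (hq : ∀ r : ℝ, q r = r ^ (α / β) * v r) :
    (∀ r : ℝ, 0 < r → 0 < deriv q r) ∧
    (∀ p : ℝ, 1 < p → p < 3 - (α / β) * (1 - m) →
      Tendsto (fun r : ℝ => r ^ p * deriv q r / q r) atTop (nhds 0)) := by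
  have hm1 : m < 1 := lt_one_of_lt_sub_two_div hm'
  have hαβ' : α * (1 - m) < 2 * β := (lt_div_iff₀ (sub_pos.2 hm1)).1 hαβ
  obtain ⟨hderiv, hlim⟩ := stmt17_general n m α β η hm hm1.le hα hαβ'
    (mul_lt_sub_two_mul_of_lt_sub_two_div hm hm' hα hαβ') v hv q hq
  exact ⟨hderiv, fun p _ hp => hlim p hp⟩
end
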